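/- arXiv:1704.04690 — 7 statements merged into one kernel-verified Lean document; each statement's English description precedes it below -/
import Mathlib

section
/- Let X be a nonempty finite index set and (ρ_x)_{x∈X} a family of positive semidefinite n×n complex matrices. Let (M_x)_{x∈X} be a POVM, i.e. each M_x is positive semidefinite and ∑_{x∈X} M_x = I. If the operator Λ := ∑_{x∈X} ρ_x M_x satisfies that Λ − ρ_x is positive semidefinite for every x ∈ X, then for every POVM (N_x)_{x∈X} (each N_x positive semidefinite with ∑_x N_x = I) one has ∑_{x∈X} tr(ρ_x N_x) ≤ ∑_{x∈X} tr(ρ_x M_x). -/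
open Matrix ComplexOrder

theorem aux_tr {n : ℕ} {A B : Matrix (Fin n) (Fin n) ℂ} (hA : A.PosSemidef) (hB : B.PosSemidef) :
    0 ≤ ((A * B).trace).re := by
  open scoped MatrixOrder Matrix.Norms.L2Operator in
  obtain ⟨C, rfl⟩ := CStarAlgebra.nonneg_iff_eq_star_mul_self.mp hB.nonneg
  rw [← mul_assoc, Matrix.trace_mul_comm, ← mul_assoc]
  exact (Complex.nonneg_iff.mp (hA.mul_mul_conjTranspose_same C).trace_nonneg).1

/-- **Holevo optimality criterion.** If a POVM `M` on states `ρ` satisfies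
`Λ - ρ_x ⪰ 0` for `Λ = ∑ ρ_x M_x`, then no POVM `N` achieves a larger
success probability `∑ tr(ρ_x N_x)`. -/
theorem stmt0 {n : ℕ} {X : Type*} [Fintype X] [Nonempty X]
    (ρ M N : X → Matrix (Fin n) (Fin n) ℂ)
    (hρ : ∀ x, (ρ x).PosSemidef)
    (hMpsd : ∀ x, (M x).PosSemidef) (hMsum : ∑ x, M x = 1)
    (hNpsd : ∀ x, (N x).PosSemidef) (hNsum : ∑ x, N x = 1)
    (hΛ : ∀ x, ((∑ y, ρ y * M y) - ρ x).PosSemidef) :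
    ∑ x, ((ρ x * N x).trace).re ≤ ∑ x, ((ρ x * M x).trace).re := by
  have h : 0 ≤ ∑ x, ((((∑ y, ρ y * M y) - ρ x) * N x).trace).re :=
    Finset.sum_nonneg fun x _ => aux_tr (hΛ x) (hNpsd x)
  have e : ∑ x, (((∑ y, ρ y * M y) * N x).trace).re = ∑ x, ((ρ x * M x).trace).re := by
    rw [← Complex.re_sum, ← Matrix.trace_sum, ← Finset.mul_sum, hNsum, mul_one,
      Matrix.trace_sum, Complex.re_sum]
  simp only [sub_mul, Matrix.trace_sub, Complex.sub_re, Finset.sum_sub_distrib] at h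
  linarith
end

section
/- Let ρ₀ and ρ₁ be density matrices on ℂⁿ (positive semidefinite with trace 1) and let p₀, p₁ ≥ 0 with p₀ + p₁ = 1. Then the supremum over all binary POVMs (M₀, M₁) (positive semidefinite matrices with M₀ + M₁ = I) of p₀·tr(M₀ρ₀) + p₁·tr(M₁ρ₁) equals ½(1 + ‖p₀ρ₀ − p₁ρ₁‖₁), where for a Hermitian matrix A, ‖A‖₁ denotes the sum of the absolute values of its eigenvalues. -/
open Matrix ComplexOrder

theorem aux_trace {n : ℕ} (A : Matrix (Fin n) (Fin n) ℂ) (hA : A.IsHermitian)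
    (M : Matrix (Fin n) (Fin n) ℂ) :
    ((M * A).trace).re = ∑ i, (((hA.eigenvectorUnitary : Matrix (Fin n) (Fin n) ℂ)ᴴ * M *
      (hA.eigenvectorUnitary : Matrix (Fin n) (Fin n) ℂ)) i i).re * hA.eigenvalues i := by
  have h := hA.spectral_theorem
  rw [Unitary.conjStarAlgAut_apply] at h
  conv_lhs => rw [h]
  rw [← Matrix.mul_assoc, Matrix.trace_mul_comm, ← Matrix.mul_assoc, ← Matrix.mul_assoc,
    Matrix.star_eq_conjTranspose, Matrix.trace]
  simp [Matrix.mul_diagonal]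

/-- **Helstrom bound.** The optimal success probability for discriminating two
density matrices `ρ₀, ρ₁` with priors `p₀, p₁` by a binary POVM equals
`(1 + ‖p₀ρ₀ - p₁ρ₁‖₁)/2`, where the trace norm is the sum of the absolute
values of the eigenvalues of the Hermitian matrix `p₀ρ₀ - p₁ρ₁`. -/
theorem stmt1 {n : ℕ} (ρ₀ ρ₁ : Matrix (Fin n) (Fin n) ℂ)
    (hρ₀ : ρ₀.PosSemidef) (hρ₁ : ρ₁.PosSemidef)
    (htr₀ : ρ₀.trace = 1) (htr₁ : ρ₁.trace = 1)
    (p₀ p₁ : ℝ) (hp₀ : 0 ≤ p₀) (hp₁ : 0 ≤ p₁) (hp : p₀ + p₁ = 1)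
    (hA : ((p₀ : ℂ) • ρ₀ - (p₁ : ℂ) • ρ₁).IsHermitian) :
    sSup {g : ℝ | ∃ M₀ M₁ : Matrix (Fin n) (Fin n) ℂ,
        M₀.PosSemidef ∧ M₁.PosSemidef ∧ M₀ + M₁ = 1 ∧
        g = p₀ * ((M₀ * ρ₀).trace).re + p₁ * ((M₁ * ρ₁).trace).re} =
      (1 + ∑ i, |hA.eigenvalues i|) / 2 := by
  have key : ∀ M₀ M₁ : Matrix (Fin n) (Fin n) ℂ, M₀ + M₁ = 1 →
      p₀ * ((M₀ * ρ₀).trace).re + p₁ * ((M₁ * ρ₁).trace).re =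
      p₁ + ((M₀ * ((p₀ : ℂ) • ρ₀ - (p₁ : ℂ) • ρ₁)).trace).re := by
    intro M₀ M₁ h
    obtain rfl : M₁ = 1 - M₀ := by rw [← h]; abel
    simp [Matrix.mul_sub, Matrix.sub_mul, htr₁]
    ring
  have hsum : ∑ i, hA.eigenvalues i = p₀ - p₁ := by
    have h := hA.trace_eq_sum_eigenvalues
    have h2 := congrArg Complex.re h
    simpa [htr₀, htr₁] using h2.symm
  have hval : (1 + ∑ i, |hA.eigenvalues i|) / 2 = p₁ + ∑ i, max (hA.eigenvalues i) 0 := by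
    have : ∀ x : ℝ, max x 0 = (|x| + x) / 2 := by
      intro x
      rcases le_total 0 x with h | h
      · rw [max_eq_left h, abs_of_nonneg h]; ring
      · rw [max_eq_right h, abs_of_nonpos h]; ring
    simp_rw [this]
    rw [← Finset.sum_div, Finset.sum_add_distrib, hsum]
    linarith
  rw [hval]
  have hU : (hA.eigenvectorUnitary : Matrix (Fin n) (Fin n) ℂ)ᴴ *
      (hA.eigenvectorUnitary : Matrix (Fin n) (Fin n) ℂ) = 1 :=
    Unitary.coe_star_mul_self hA.eigenvectorUnitary
  have hU' : (hA.eigenvectorUnitary : Matrix (Fin n) (Fin n) ℂ) *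
      (hA.eigenvectorUnitary : Matrix (Fin n) (Fin n) ℂ)ᴴ = 1 :=
    Unitary.coe_mul_star_self hA.eigenvectorUnitary
  have hT := aux_trace _ hA
  generalize (hA.eigenvectorUnitary : Matrix (Fin n) (Fin n) ℂ) = U at hU hU' hT
  generalize hA.eigenvalues = l at hT ⊢
  apply IsGreatest.csSup_eq
  constructor
  · refine ⟨U * diagonal (fun i => if 0 ≤ l i then 1 else 0) * Uᴴ,
      U * diagonal (fun i => if 0 ≤ l i then 0 else 1) * Uᴴ, ?_, ?_, ?_, ?_⟩
    · apply PosSemidef.mul_mul_conjTranspose_same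
      apply PosSemidef.diagonal
      intro i
      dsimp
      split_ifs <;> simp
    · apply PosSemidef.mul_mul_conjTranspose_same
      apply PosSemidef.diagonal
      intro i
      dsimp
      split_ifs <;> simp
    · rw [← Matrix.add_mul, ← Matrix.mul_add, diagonal_add]
      have : (fun i => (if 0 ≤ l i then (1 : ℂ) else 0) + (if 0 ≤ l i then 0 else 1)) =
          fun _ => 1 := by
        funext i; split_ifs <;> simp
      rw [this, diagonal_one, Matrix.mul_one, hU']
    · rw [key, hT]
      · congr 1
        apply Finset.sum_congr rfl
        intro i _
        have : Uᴴ * (U * diagonal (fun i => if 0 ≤ l i then (1 : ℂ) else 0) * Uᴴ) * U =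
            diagonal (fun i => if 0 ≤ l i then (1 : ℂ) else 0) := by
          calc _ = (Uᴴ * U) * diagonal (fun i => if 0 ≤ l i then (1 : ℂ) else 0) * (Uᴴ * U) := by
                simp only [Matrix.mul_assoc]
            _ = _ := by rw [hU]; simp
        rw [this, diagonal_apply_eq]
        split_ifs with h
        · simp [h]
        · simp [le_of_not_ge h]
      · rw [← Matrix.add_mul, ← Matrix.mul_add, diagonal_add]
        have : (fun i => (if 0 ≤ l i then (1 : ℂ) else 0) + (if 0 ≤ l i then 0 else 1)) =
            fun _ => 1 := by
          funext i; split_ifs <;> simp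
        rw [this, diagonal_one, Matrix.mul_one, hU']
  · rintro g ⟨M₀, M₁, h0, h1, h, rfl⟩
    rw [key _ _ h, hT]
    gcongr with i _
    have a0 := (h0.conjTranspose_mul_mul_same U).diag_nonneg (i := i)
    have a1 := (h1.conjTranspose_mul_mul_same U).diag_nonneg (i := i)
    have hs : (Uᴴ * M₀ * U) i i + (Uᴴ * M₁ * U) i i = 1 := by
      rw [← Matrix.add_apply, ← Matrix.add_mul, ← Matrix.mul_add, h, Matrix.mul_one, hU,
        Matrix.one_apply_eq]
    have hs' := congrArg Complex.re hs
    rw [Complex.add_re, Complex.one_re] at hs'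
    have b0 := (Complex.le_def.1 a0).1
    have b1 := (Complex.le_def.1 a1).1
    rw [Complex.zero_re] at b0 b1
    rcases le_total 0 (l i) with hl | hl
    · rw [max_eq_left hl]; nlinarith
    · rw [max_eq_right hl]; nlinarith
end

section
/- Let α ∈ (0, π/2) with cos α = 1/√3, and for u, w, g ∈ {0,1} define the unit vector ψ_{uwg} ∈ ℂ² by ψ_{uwg} = (−1)^{gu}[ (−e^{iπ/4})^g cos(α/2) |g⊕w⟩ + (−1)^u (e^{iπ/4})^{1−g} sin(α/2) |1⊕g⊕w⟩ ], where |0⟩, |1⟩ is the standard basis of ℂ² and ⊕ is XOR. Set e₀ := ψ_{000}, e₁ := ψ_{001}, and define the Bell vectors Ψ^± = (e₀⊗e₁ ± e₁⊗e₀)/√2 and Φ^± = (e₀⊗e₀ ± e₁⊗e₁)/√2 in ℂ²⊗ℂ². Let β ∈ [0, 1/2] and let ρ = λ₀|Ψ^−⟩⟨Ψ^−| + λ₁|Φ^−⟩⟨Φ^−| + λ₂|Ψ^+⟩⟨Ψ^+| + λ₃|Φ^+⟩⟨Φ^+| with real λ₀,λ₁,λ₂,λ₃ satisfying λ₀+λ₁+λ₂+λ₃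 = 1. If ⟨ψ_{uwg}⊗ψ_{uwg}| ρ |ψ_{uwg}⊗ψ_{uwg}⟩ = β/2 for all u, w, g ∈ {0,1}, then λ₁ = λ₂ = λ₃ = β/2 and λ₀ = 1 − (3/2)β. -/
open Matrix ComplexOrder

/-- `√i = e^{iπ/4}`. -/
noncomputable def sqrtI : ℂ := Complex.exp (Real.pi / 4 * Complex.I)

/-- The 8-state (QOTP) encoding of bit `g` in basis `(u,w)`. -/
noncomputable def psi8 (α : ℝ) (u w g : Fin 2) : Fin 2 → ℂ := fun i =>
  (-1 : ℂ) ^ (g.val * u.val) *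
    ((-sqrtI) ^ g.val * (Real.cos (α / 2) : ℂ) * (if i = g + w then 1 else 0) +
      (-1 : ℂ) ^ u.val * sqrtI ^ (1 - g.val) * (Real.sin (α / 2) : ℂ) *
        (if i = 1 + g + w then 1 else 0))

/-- Tensor product of two qubit vectors. -/
noncomputable def tens (x y : Fin 2 → ℂ) : Fin 2 × Fin 2 → ℂ := fun p => x p.1 * y p.2

/-- Rank-one outer product `|v⟩⟨v|`. -/
noncomputable def outerProd {ι : Type*} (v : ι → ℂ) : Matrix ι ι ℂ :=
  Matrix.of fun i j => v i * (starRingEnd ℂ) (v j)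

theorem quad_aux (x e0 e1 : Fin 2 → ℂ) (a b : ℂ) (l0 l1 l2 l3 : ℝ)
    (ha : a = star (e0 0) * x 0 + star (e0 1) * x 1)
    (hb : b = star (e1 0) * x 0 + star (e1 1) * x 1) :
    star (tens x x) ⬝ᵥ
      ((l0 : ℂ) • outerProd ((Real.sqrt 2 : ℂ)⁻¹ • (tens e0 e1 - tens e1 e0)) +
        (l1 : ℂ) • outerProd ((Real.sqrt 2 : ℂ)⁻¹ • (tens e0 e0 - tens e1 e1)) +
        (l2 : ℂ) • outerProd ((Real.sqrt 2 : ℂ)⁻¹ • (tens e0 e1 + tens e1 e0)) +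
        (l3 : ℂ) • outerProd ((Real.sqrt 2 : ℂ)⁻¹ • (tens e0 e0 + tens e1 e1))).mulVec
        (tens x x) =
      (l1 : ℂ) / 2 * ((a ^ 2 - b ^ 2) * star (a ^ 2 - b ^ 2)) +
      (l2 : ℂ) / 2 * ((2 * a * b) * star (2 * a * b)) +
      (l3 : ℂ) / 2 * ((a ^ 2 + b ^ 2) * star (a ^ 2 + b ^ 2)) := by
  have h2 : ((Real.sqrt 2 : ℂ)⁻¹) ^ 2 = 1 / 2 := by
    rw [inv_pow, ← Complex.ofReal_pow, Real.sq_sqrt (by norm_num)]; norm_num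
  subst ha hb
  simp only [dotProduct, Matrix.mulVec, outerProd, tens, Fintype.sum_prod_type, Fin.sum_univ_two,
    Pi.star_apply, Matrix.add_apply, Matrix.smul_apply, Matrix.of_apply, Pi.smul_apply,
    Pi.add_apply, Pi.sub_apply, smul_eq_mul, map_mul, map_add, map_sub, map_inv₀,
    Complex.conj_ofReal, Complex.star_def, map_pow, Complex.conj_conj, map_ofNat]
  generalize (Real.sqrt 2 : ℂ)⁻¹ = r at h2
  ring_nf
  simp only [h2]
  ring

theorem sqrtI_eq : sqrtI = ((Real.sqrt 2 / 2 : ℝ) : ℂ) * (1 + Complex.I) := by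
  have h : ((Real.pi : ℂ) / 4) = ((Real.pi / 4 : ℝ) : ℂ) := by push_cast; rfl
  rw [sqrtI, h, Complex.exp_mul_I, ← Complex.ofReal_cos, ← Complex.ofReal_sin,
    Real.cos_pi_div_four, Real.sin_pi_div_four]
  ring

/-- **Noise symmetrisation, 8-state case.** A Bell-diagonal two-qubit state giving
bit error rate exactly `β` in all four 8-state bases has `λ₁ = λ₂ = λ₃ = β/2` and
`λ₀ = 1 - (3/2)β`. -/
theorem stmt2 (α β lam0 lam1 lam2 lam3 : ℝ)
    (hα : α ∈ Set.Ioo 0 (Real.pi / 2)) (hcos : Real.cos α = 1 / Real.sqrt 3)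
    (hβ : β ∈ Set.Icc (0:ℝ) (1/2))
    (hlam : lam0 + lam1 + lam2 + lam3 = 1) :
    let e0 := psi8 α 0 0 0
    let e1 := psi8 α 0 0 1
    let Psim := (Real.sqrt 2 : ℂ)⁻¹ • (tens e0 e1 - tens e1 e0)
    let Psip := (Real.sqrt 2 : ℂ)⁻¹ • (tens e0 e1 + tens e1 e0)
    let Phim := (Real.sqrt 2 : ℂ)⁻¹ • (tens e0 e0 - tens e1 e1)
    let Phip := (Real.sqrt 2 : ℂ)⁻¹ • (tens e0 e0 + tens e1 e1)
    let ρ := (lam0 : ℂ) • outerProd Psim + (lam1 : ℂ) • outerProd Phim +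
      (lam2 : ℂ) • outerProd Psip + (lam3 : ℂ) • outerProd Phip
    (∀ u w g : Fin 2,
        star (tens (psi8 α u w g) (psi8 α u w g)) ⬝ᵥ
          ρ.mulVec (tens (psi8 α u w g) (psi8 α u w g)) = (β / 2 : ℂ)) →
    lam1 = β / 2 ∧ lam2 = β / 2 ∧ lam3 = β / 2 ∧ lam0 = 1 - 3/2 * β := by
  intro e0 e1 Psim Psip Phim Phip ρ H
  set c := Real.cos (α / 2) with hc
  set d := Real.sin (α / 2) with hd
  have hcd : c ^ 2 + d ^ 2 = 1 := by rw [hc, hd]; exact Real.cos_sq_add_sin_sq _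
  have hC : Real.cos α = c ^ 2 - d ^ 2 := by
    have := Real.cos_two_mul' (α / 2)
    rwa [mul_div_cancel₀ _ (by norm_num : (2:ℝ) ≠ 0)] at this
  have hP : (c ^ 2 - d ^ 2) ^ 2 = 1 / 3 := by
    rw [← hC, hcos, div_pow, Real.sq_sqrt (by norm_num)]; norm_num
  set r : ℝ := Real.sqrt 2 / 2 with hr
  have hr2 : r ^ 2 = 1 / 2 := by
    rw [hr, div_pow, Real.sq_sqrt (by norm_num)]; norm_num
  have hs : sqrtI = (r : ℂ) * (1 + Complex.I) := sqrtI_eq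
  have hr2C : (r : ℂ) ^ 2 = 1 / 2 := by rw [← Complex.ofReal_pow, hr2]; norm_num
  have hcdC : (c : ℂ) ^ 2 + (d : ℂ) ^ 2 = 1 := by exact_mod_cast hcd
  have hI : Complex.I ^ 2 = -1 := Complex.I_sq
  obtain ⟨p, hp⟩ : ∃ p : ℝ, p = c ^ 2 - d ^ 2 := ⟨_, rfl⟩
  obtain ⟨q, hq⟩ : ∃ q : ℝ, q = 2 * c * d := ⟨_, rfl⟩
  have hp2 : p ^ 2 = 1 / 3 := by rw [hp, hP]
  have hq2 : q ^ 2 = 2 / 3 := by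
    have : p ^ 2 + q ^ 2 = (c ^ 2 + d ^ 2) ^ 2 := by rw [hp, hq]; ring
    rw [hcd, hp2] at this; linarith
  have hpC : (p : ℂ) = c ^ 2 - d ^ 2 := by rw [hp]; push_cast; rfl
  have hqC : (q : ℂ) = 2 * c * d := by rw [hq]; push_cast; rfl
  have k0 := (quad_aux (psi8 α 0 0 0) e0 e1 1 0 lam0 lam1 lam2 lam3
    (by
      simp [e0, psi8, hs, ← hc, ← hd, -Complex.ofReal_cos, -Complex.ofReal_sin]
      grind)
    (by
      simp [e1, psi8, hs, ← hc, ← hd, -Complex.ofReal_cos, -Complex.ofReal_sin]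
      grind)).symm.trans (H 0 0 0)
  have k1 := (quad_aux (psi8 α 1 0 0) e0 e1 p q lam0 lam1 lam2 lam3
    (by
      simp [e0, psi8, hs, ← hc, ← hd, -Complex.ofReal_cos, -Complex.ofReal_sin]
      grind)
    (by
      simp [e1, psi8, hs, ← hc, ← hd, -Complex.ofReal_cos, -Complex.ofReal_sin]
      grind)).symm.trans (H 1 0 0)
  have k2 := (quad_aux (psi8 α 0 1 0) e0 e1 (r * q) (r * (-p + Complex.I)) lam0 lam1 lam2 lam3
    (by
      simp [e0, psi8, hs, ← hc, ← hd, -Complex.ofReal_cos, -Complex.ofReal_sin]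
      grind)
    (by
      simp [e1, psi8, hs, ← hc, ← hd, -Complex.ofReal_cos, -Complex.ofReal_sin]
      grind)).symm.trans (H 0 1 0)
  have m0 : lam1 / 2 + lam3 / 2 = β / 2 := by
    simp at k0
    exact_mod_cast k0
  have hp2C : (p : ℂ) ^ 2 = 1 / 3 := by rw [← Complex.ofReal_pow, hp2]; norm_num
  have hq2C : (q : ℂ) ^ 2 = 2 / 3 := by rw [← Complex.ofReal_pow, hq2]; norm_num
  have m1 : lam1 / 18 + 4 / 9 * lam2 + lam3 / 2 = β / 2 := by
    simp at k1
    have : (lam1 / 18 + 4 / 9 * lam2 + lam3 / 2 : ℂ) = β / 2 := by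
      clear hs hc hd hcos hC hpC hqC hcdC H k0 k2
      grind
    apply Complex.ofReal_injective
    push_cast
    exact this
  have m2 : 7 / 18 * lam1 + 4 / 9 * lam2 + lam3 / 6 = β / 2 := by
    simp at k2
    have : (7 / 18 * lam1 + 4 / 9 * lam2 + lam3 / 6 : ℂ) = β / 2 := by
      clear hs hc hd hcos hC hpC hqC hcdC H k0 k1
      grind
    apply Complex.ofReal_injective
    push_cast
    exact this
  refine ⟨?_, ?_, ?_, ?_⟩ <;> linarith
end

section
/- Let β ∈ [0, 2/3) and let v = (v_x, v_y, v_z) ∈ ℝ³ be a unit vector with v_z² < 1. In ℂ⁴ with standard orthonormal basis m₀, m₁, m₂, m₃ define E01 = [√(1−(3/2)β)·m₀ + √(β/2)·(v_x m₁ + v_y m₂ + v_z m₃)]/√(1−β), E10 = [√(1−(3/2)β)·m₀ − √(β/2)·(v_x m₁ + v_y m₂ + v_z m₃)]/√(1−β), E00 = [(−v_x v_z − i v_y) m₁ + (−v_y v_z + i v_x) m₂ + (1−v_z²) m₃]/√(2(1−v_z²)), and E11 = [(−v_x v_z + i v_y) m₁ + (−v_y v_z − i v_x) m₂ + (1−v_z²)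 m₃]/√(2(1−v_z²)). Then: (i) E01, E10, E00, E11 are all unit vectors; (ii) ⟨E01, E10⟩ = (1−2β)/(1−β); (iii) ⟨E00, E11⟩ = 0; (iv) E00 and E11 are each orthogonal to both E01 and E10. -/
open Matrix

/-- Hermitian inner product on `ℂ⁴`, antilinear in the first argument. -/
noncomputable def ip (x y : Fin 4 → ℂ) : ℂ :=
  ∑ i, (starRingEnd ℂ) (x i) * y i

/-- **Structure of Eve's conditional ancilla states.** The four purification
vectors `E^v_{xy}` are unit vectors, `⟨E01,E10⟩ = (1-2β)/(1-β)`,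
`⟨E00,E11⟩ = 0`, and `E00, E11` are orthogonal to `E01, E10`. -/
theorem stmt3 (β vx vy vz : ℝ) (hβ : β ∈ Set.Ico (0:ℝ) (2/3))
    (hunit : vx^2 + vy^2 + vz^2 = 1) (hvz : vz^2 < 1) :
    let s1 : ℂ := (Real.sqrt (1 - 3/2*β) : ℝ)
    let s2 : ℂ := (Real.sqrt (β/2) : ℝ)
    let d1 : ℂ := (Real.sqrt (1 - β) : ℝ)
    let d2 : ℂ := (Real.sqrt (2*(1 - vz^2)) : ℝ)
    let E01 : Fin 4 → ℂ := ![s1/d1, s2*(vx:ℂ)/d1, s2*(vy:ℂ)/d1, s2*(vz:ℂ)/d1]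
    let E10 : Fin 4 → ℂ := ![s1/d1, -(s2*(vx:ℂ))/d1, -(s2*(vy:ℂ))/d1, -(s2*(vz:ℂ))/d1]
    let E00 : Fin 4 → ℂ := ![0, (-((vx:ℂ)*(vz:ℂ)) - (vy:ℂ)*Complex.I)/d2,
      (-((vy:ℂ)*(vz:ℂ)) + (vx:ℂ)*Complex.I)/d2, (1 - (vz:ℂ)^2)/d2]
    let E11 : Fin 4 → ℂ := ![0, (-((vx:ℂ)*(vz:ℂ)) + (vy:ℂ)*Complex.I)/d2,
      (-((vy:ℂ)*(vz:ℂ)) - (vx:ℂ)*Complex.I)/d2, (1 - (vz:ℂ)^2)/d2]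
    ip E01 E01 = 1 ∧ ip E10 E10 = 1 ∧ ip E00 E00 = 1 ∧ ip E11 E11 = 1 ∧
    ip E01 E10 = (((1 - 2*β)/(1 - β) : ℝ) : ℂ) ∧
    ip E00 E11 = 0 ∧
    ip E00 E01 = 0 ∧ ip E00 E10 = 0 ∧ ip E11 E01 = 0 ∧ ip E11 E10 = 0 := by
  obtain ⟨h0, h1⟩ := hβ
  intro s1 s2 d1 d2 E01 E10 E00 E11
  have hs1 : s1 * s1 = 1 - 3/2*(β:ℂ) := by
    simp only [s1]; rw [← Complex.ofReal_mul, Real.mul_self_sqrt (by linarith)]; push_cast; ring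
  have hs2 : s2 * s2 = (β:ℂ)/2 := by
    simp only [s2]; rw [← Complex.ofReal_mul, Real.mul_self_sqrt (by linarith)]; push_cast; ring
  have hd1 : d1 * d1 = 1 - (β:ℂ) := by
    simp only [d1]; rw [← Complex.ofReal_mul, Real.mul_self_sqrt (by linarith)]; push_cast; ring
  have hd2 : d2 * d2 = 2 * (1 - (vz:ℂ)^2) := by
    simp only [d2]; rw [← Complex.ofReal_mul, Real.mul_self_sqrt (by linarith)]; push_cast; ring
  have n1 : d1 ≠ 0 := by
    simp only [d1]; exact Complex.ofReal_ne_zero.2 (Real.sqrt_pos.2 (by linarith)).ne'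
  have n2 : d2 ≠ 0 := by
    simp only [d2]; exact Complex.ofReal_ne_zero.2 (Real.sqrt_pos.2 (by linarith)).ne'
  have nb : 1 - (β:ℂ) ≠ 0 := by rw [← hd1]; exact mul_ne_zero n1 n1
  have cs1 : (starRingEnd ℂ) s1 = s1 := Complex.conj_ofReal _
  have cs2 : (starRingEnd ℂ) s2 = s2 := Complex.conj_ofReal _
  have cd1 : (starRingEnd ℂ) d1 = d1 := Complex.conj_ofReal _
  have cd2 : (starRingEnd ℂ) d2 = d2 := Complex.conj_ofReal _
  have hu : (vx:ℂ)^2 + (vy:ℂ)^2 + (vz:ℂ)^2 = 1 := by exact_mod_cast hunit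
  have hI : Complex.I * Complex.I = -1 := Complex.I_mul_I
  clear_value s1 s2 d1 d2
  simp only [E01, E10, E00, E11, ip, Fin.sum_univ_four, Matrix.cons_val, map_div₀, map_mul, map_neg,
    map_sub, map_add, map_pow, map_one, map_zero, Complex.conj_ofReal, Complex.conj_I, cs1, cs2, cd1, cd2]
  push_cast
  clear E01 E10 E00 E11 cs1 cs2 cd1 cd2
  generalize (vx:ℂ) = x at *
  generalize (vy:ℂ) = y at *
  generalize (vz:ℂ) = z at *
  generalize (β:ℂ) = b at *
  generalize Complex.I = I at *
  refine ⟨?_, ?_, ?_, ?_, ?_, ?_, ?_, ?_, ?_, ?_⟩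
  · field_simp
    linear_combination hs1 + hs2 * (x^2+y^2+z^2) + b/2*hu - hd1
  · field_simp
    linear_combination hs1 + hs2 * (x^2+y^2+z^2) + b/2*hu - hd1
  · field_simp
    linear_combination -hd2 + (z^2+1)*hu - (x^2+y^2)*hI
  · field_simp
    linear_combination -hd2 + (z^2+1)*hu - (x^2+y^2)*hI
  · have e : (1 - 2*b)/(1-b) = (1-2*b)/(d1*d1) := by rw [hd1]
    rw [e]
    field_simp
    linear_combination hs1 - hs2 * (x^2+y^2+z^2) - b/2*hu
  · field_simp
    linear_combination (z^2-1)*hu + (x^2+y^2)*hI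
  · field_simp
    linear_combination -s2*z*hu
  · field_simp
    linear_combination s2*z*hu
  · field_simp
    linear_combination -s2*z*hu
  · field_simp
    linear_combination s2*z*hu
end

section
/- In ℂ² let ω₁ = ½(I + σ_x), ω₂ = ½(I + σ_y), ω₃ = ½(I + σ_z) be the density matrices of the spin states pointing in the +x, +y and +z directions. Then the supremum over all POVMs (M₁, M₂, M₃) on ℂ² of (1/3)·∑_{b=1}^{3} tr(M_b ω_b) equals 1/3 + 2/(3√6), and this value is attained by the POVM M_b = (1/3)(I − n_b·σ) with n₁ = (−2,1,1)/√6, n₂ = (1,−2,1)/√6, n₃ = (1,1,−2)/√6, where n·σ = n_x σ_x + n_y σ_y + n_z σ_z. -/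
open Matrix ComplexOrder

def pauliX : Matrix (Fin 2) (Fin 2) ℂ := !![0, 1; 1, 0]
def pauliY : Matrix (Fin 2) (Fin 2) ℂ := !![0, -Complex.I; Complex.I, 0]
def pauliZ : Matrix (Fin 2) (Fin 2) ℂ := !![1, 0; 0, -1]

/-- `n·σ = n_x σ_x + n_y σ_y + n_z σ_z` for a real vector `n`. -/
noncomputable def pauliVec (a b c : ℝ) : Matrix (Fin 2) (Fin 2) ℂ :=
  (a : ℂ) • pauliX + (b : ℂ) • pauliY + (c : ℂ) • pauliZ

/-- The spin states `ω₁ = (I+σ_x)/2`, `ω₂ = (I+σ_y)/2`, `ω₃ = (I+σ_z)/2`. -/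
noncomputable def omega6 : Fin 3 → Matrix (Fin 2) (Fin 2) ℂ :=
  ![(1/2 : ℂ) • (1 + pauliX), (1/2 : ℂ) • (1 + pauliY), (1/2 : ℂ) • (1 + pauliZ)]

/-- The min-entropy-optimal POVM `M_b = (I - n_b·σ)/3` with
`n₁ = (-2,1,1)/√6`, `n₂ = (1,-2,1)/√6`, `n₃ = (1,1,-2)/√6`. -/
noncomputable def Mpovm6 : Fin 3 → Matrix (Fin 2) (Fin 2) ℂ :=
  ![(1/3 : ℂ) • (1 - pauliVec (-2/Real.sqrt 6) (1/Real.sqrt 6) (1/Real.sqrt 6)),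
    (1/3 : ℂ) • (1 - pauliVec (1/Real.sqrt 6) (-2/Real.sqrt 6) (1/Real.sqrt 6)),
    (1/3 : ℂ) • (1 - pauliVec (1/Real.sqrt 6) (1/Real.sqrt 6) (-2/Real.sqrt 6))]

lemma psd_facts (M : Matrix (Fin 2) (Fin 2) ℂ) (h : M.PosSemidef) :
    (M 0 1).re = (M 1 0).re ∧ (M 0 1).im = -(M 1 0).im ∧ 0 ≤ (M 0 0).re ∧ 0 ≤ (M 1 1).re ∧
    (M 1 0).re ^ 2 + (M 1 0).im ^ 2 ≤ (M 0 0).re * (M 1 1).re := by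
  have hh : star (M 1 0) = M 0 1 := h.1.apply 0 1
  have h0 := h.1.apply 0 0
  have h1 : (M 0 1).re = (M 1 0).re := by rw [← hh]; simp
  have h2 : (M 0 1).im = -(M 1 0).im := by rw [← hh]; simp
  have hd := h.det_nonneg
  have p0 := h.diag_nonneg (i := 0)
  have p1 := h.diag_nonneg (i := 1)
  rw [Complex.le_def] at hd p0 p1
  have hd1 := hd.1
  rw [Matrix.det_fin_two] at hd1
  simp only [Complex.zero_re, Complex.sub_re, Complex.mul_re, h1, h2] at hd1
  have e0 := p0.2
  simp only [Complex.zero_im] at e0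
  rw [← e0] at hd1
  exact ⟨h1, h2, by simpa using p0.1, by simpa using p1.1, by nlinarith⟩

lemma cs_bound (M : Matrix (Fin 2) (Fin 2) ℂ) (h : M.PosSemidef) (a b c r : ℝ) (hr : 0 ≤ r)
    (hn : a ^ 2 + b ^ 2 + c ^ 2 = r ^ 2) :
    a * (2 * (M 1 0).re) + b * (2 * (M 1 0).im) + c * ((M 0 0).re - (M 1 1).re) ≤
      r * ((M 0 0).re + (M 1 1).re) := by
  obtain ⟨-, -, h3, h4, h5⟩ := psd_facts M h
  generalize (M 1 0).re = x at *
  generalize (M 1 0).im = y at *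
  generalize (M 0 0).re = p at *
  generalize (M 1 1).re = q at *
  apply le_of_sq_le_sq _ (by positivity)
  have k1 : (a * (2 * x) + b * (2 * y) + c * (p - q)) ^ 2 ≤
      (a ^ 2 + b ^ 2 + c ^ 2) * ((2 * x) ^ 2 + (2 * y) ^ 2 + (p - q) ^ 2) := by
    nlinarith [sq_nonneg (a * (2 * y) - b * (2 * x)), sq_nonneg (a * (p - q) - c * (2 * x)),
      sq_nonneg (b * (p - q) - c * (2 * y))]
  rw [hn] at k1
  refine k1.trans ?_
  rw [mul_pow r]
  exact mul_le_mul_of_nonneg_left (by nlinarith) (sq_nonneg r)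

lemma unit_psd (a b c : ℝ) (hn : a ^ 2 + b ^ 2 + c ^ 2 = 1) :
    ((1/3 : ℂ) • (1 - pauliVec a b c)).PosSemidef := by
  have hn' : (a : ℂ) ^ 2 + (b : ℂ) ^ 2 + (c : ℂ) ^ 2 = 1 := by exact_mod_cast hn
  have key : (1/3 : ℂ) • (1 - pauliVec a b c) =
      (1/6 : ℝ) • ((1 - pauliVec a b c)ᴴ * (1 - pauliVec a b c)) := by
    ext i j
    fin_cases i <;> fin_cases j <;>
      simp [pauliVec, pauliX, pauliY, pauliZ, Matrix.mul_apply, Fin.sum_univ_two,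
        Matrix.one_apply] <;>
      first
        | linear_combination (-1/6 : ℂ) * hn' + ((b : ℂ) ^ 2 / 6) * Complex.I_sq
        | ring
  rw [key]
  exact (Matrix.posSemidef_conjTranspose_mul_self _).smul (by norm_num)

lemma obj_eq (M : Fin 3 → Matrix (Fin 2) (Fin 2) ℂ) :
    ∑ b, (M b * omega6 b).trace.re =
      ((M 0 0 0).re + (M 0 1 1).re + (M 0 0 1).re + (M 0 1 0).re) / 2 +
      ((M 1 0 0).re + (M 1 1 1).re - (M 1 0 1).im + (M 1 1 0).im) / 2 + (M 2 0 0).re := by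
  simp [Fin.sum_univ_three, omega6, pauliX, pauliY, pauliZ, Matrix.trace, Matrix.mul_apply,
    Fin.sum_univ_two, Matrix.one_apply]
  ring

lemma val_eq : (1:ℝ)/3 + 2/(3 * Real.sqrt 6) = 1/3 + Real.sqrt 6 / 9 := by
  have h6 : Real.sqrt 6 ^ 2 = 6 := Real.sq_sqrt (by norm_num)
  have : 0 < Real.sqrt 6 := by positivity
  field_simp
  nlinarith

lemma upper (M : Fin 3 → Matrix (Fin 2) (Fin 2) ℂ) (hp : ∀ b, (M b).PosSemidef)
    (hs : ∑ b, M b = 1) :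
    (1/3) * ∑ b, (M b * omega6 b).trace.re ≤ 1/3 + 2/(3 * Real.sqrt 6) := by
  rw [obj_eq, val_eq]
  have h6 : Real.sqrt 6 ^ 2 = 6 := Real.sq_sqrt (by norm_num)
  have c0 := cs_bound (M 0) (hp 0) (2/3) (-1/3) (-1/3) (Real.sqrt 6 / 3) (by positivity)
    (by linear_combination (-1/9 : ℝ) * h6)
  have c1 := cs_bound (M 1) (hp 1) (-1/3) (2/3) (-1/3) (Real.sqrt 6 / 3) (by positivity)
    (by linear_combination (-1/9 : ℝ) * h6)
  have c2 := cs_bound (M 2) (hp 2) (-1/3) (-1/3) (2/3) (Real.sqrt 6 / 3) (by positivity)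
    (by linear_combination (-1/9 : ℝ) * h6)
  obtain ⟨a0, b0, -⟩ := psd_facts _ (hp 0)
  obtain ⟨a1, b1, -⟩ := psd_facts _ (hp 1)
  rw [Fin.sum_univ_three] at hs
  have s00 := congrArg Complex.re (congrFun (congrFun hs 0) 0)
  have s11 := congrArg Complex.re (congrFun (congrFun hs 1) 1)
  have s10 := congrArg Complex.re (congrFun (congrFun hs 1) 0)
  have t10 := congrArg Complex.im (congrFun (congrFun hs 1) 0)
  simp at s00 s11 s10 t10
  have e : Real.sqrt 6 / 3 * ((M 0 0 0).re + (M 0 1 1).re) +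
     Real.sqrt 6 / 3 * ((M 1 0 0).re + (M 1 1 1).re) +
     Real.sqrt 6 / 3 * ((M 2 0 0).re + (M 2 1 1).re) = 2 * Real.sqrt 6 / 3 := by
    linear_combination (Real.sqrt 6 / 3) * s00 + (Real.sqrt 6 / 3) * s11
  linarith

lemma Mp_psd (b : Fin 3) : (Mpovm6 b).PosSemidef := by
  have h6 : Real.sqrt 6 ^ 2 = 6 := Real.sq_sqrt (by norm_num)
  fin_cases b <;> exact unit_psd _ _ _ (by simp only [div_pow, h6]; norm_num)

lemma Mp_sum : ∑ b, Mpovm6 b = 1 := by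
  rw [Fin.sum_univ_three]
  ext i j
  fin_cases i <;> fin_cases j <;>
    simp [Mpovm6, pauliVec, pauliX, pauliY, pauliZ, Matrix.one_apply] <;> ring

lemma Mp_val : (1/3) * (∑ b, (Mpovm6 b * omega6 b).trace.re) = 1/3 + 2/(3 * Real.sqrt 6) := by
  rw [obj_eq]
  simp [Mpovm6, pauliVec, pauliX, pauliY, pauliZ, Matrix.one_apply, ← Complex.ofReal_inv]
  field_simp
  ring

/-- **Attack K1 on 6-state encoding, min-entropy.** The optimal probability of
guessing which of the three equiprobable states `ω_b` is present equals
`1/3 + 2/(3√6)`, attained by the POVM `M_b = (I - n_b·σ)/3`. -/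
theorem stmt16 :
    (sSup {g : ℝ | ∃ M : Fin 3 → Matrix (Fin 2) (Fin 2) ℂ,
        (∀ b, (M b).PosSemidef) ∧ (∑ b, M b) = 1 ∧
        g = (1/3) * ∑ b, (M b * omega6 b).trace.re} =
      1/3 + 2/(3 * Real.sqrt 6)) ∧
    ((∀ b, (Mpovm6 b).PosSemidef) ∧ (∑ b, Mpovm6 b) = 1) ∧
    (1/3) * (∑ b, (Mpovm6 b * omega6 b).trace.re) = 1/3 + 2/(3 * Real.sqrt 6) := by
  refine ⟨?_, ⟨Mp_psd, Mp_sum⟩, Mp_val⟩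
  apply IsGreatest.csSup_eq
  refine ⟨⟨Mpovm6, Mp_psd, Mp_sum, Mp_val.symm⟩, ?_⟩
  rintro g ⟨M, hp, hs, rfl⟩
  exact upper M hp hs
end

section
/- For u, w, g ∈ {0,1} let n_{uwg} = ((−1)^g/√3)·((−1)^u, (−1)^{u+w}, (−1)^w) ∈ ℝ³ and let P_{uwg} = ½(I + n_{uwg}·σ) be the corresponding rank-one projector on ℂ², where n·σ = n_x σ_x + n_y σ_y + n_z σ_z with the Pauli matrices σ_x, σ_y, σ_z. Then the supremum over all POVMs (M_{uw})_{u,w∈{0,1}} on ℂ² of (1/4)·∑_{u,w∈{0,1}} tr(M_{uw} P_{uw0}) equals 1/2, and this value is attained by the POVM M_{uw} = ½·P_{uw0}. -/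
open Matrix ComplexOrder

/-- The 8-state projector `P_{uwg} = (I + n_{uwg}·σ)/2` with Bloch vector
`n_{uwg} = ((-1)^g/√3)·((-1)^u, (-1)^{u+w}, (-1)^w)`. -/
noncomputable def P8 (u w g : Fin 2) : Matrix (Fin 2) (Fin 2) ℂ :=
  (1/2 : ℂ) • (1 + pauliVec
    ((-1:ℝ)^(g.val) * (-1:ℝ)^(u.val) / Real.sqrt 3)
    ((-1:ℝ)^(g.val) * (-1:ℝ)^(u.val + w.val) / Real.sqrt 3)
    ((-1:ℝ)^(g.val) * (-1:ℝ)^(w.val) / Real.sqrt 3))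

lemma bloch_eq (a b c : ℝ) : (1/2 : ℂ) • (1 + pauliVec a b c) =
    !![(1 + (c:ℂ))/2, ((a:ℂ) - b * Complex.I)/2; ((a:ℂ) + b * Complex.I)/2, (1 - (c:ℂ))/2] := by
  ext i j
  fin_cases i <;> fin_cases j <;> simp [pauliVec, pauliX, pauliY, pauliZ] <;> ring

lemma bloch_herm (a b c : ℝ) :
    ((1/2 : ℂ) • (1 + pauliVec a b c))ᴴ = (1/2 : ℂ) • (1 + pauliVec a b c) := by
  rw [bloch_eq]
  ext i j
  fin_cases i <;> fin_cases j <;> simp [Matrix.conjTranspose_apply] <;> ring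

lemma bloch_idem (a b c : ℝ) (h : a^2 + b^2 + c^2 = 1) :
    ((1/2 : ℂ) • (1 + pauliVec a b c)) * ((1/2 : ℂ) • (1 + pauliVec a b c))
      = (1/2 : ℂ) • (1 + pauliVec a b c) := by
  have h' : (a:ℂ)^2 + (b:ℂ)^2 + (c:ℂ)^2 = 1 := by exact_mod_cast h
  have hI : Complex.I ^ 2 = -1 := Complex.I_sq
  rw [bloch_eq]
  ext i j
  fin_cases i <;> fin_cases j <;> simp [Matrix.mul_apply, Fin.sum_univ_two]
  · linear_combination (1/4 : ℂ) * h' - (b:ℂ)^2/4 * hI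
  · ring
  · ring
  · linear_combination (1/4 : ℂ) * h' - (b:ℂ)^2/4 * hI

lemma P8_herm (u w g : Fin 2) : (P8 u w g)ᴴ = P8 u w g := bloch_herm _ _ _

lemma P8_idem (u w g : Fin 2) : P8 u w g * P8 u w g = P8 u w g := by
  apply bloch_idem
  have h3 : (Real.sqrt 3)^2 = 3 := Real.sq_sqrt (by norm_num)
  have e : ∀ n : ℕ, ((-1:ℝ)^n)^2 = 1 := fun n => by rw [← pow_mul, mul_comm, pow_mul]; simp
  simp only [div_pow, mul_pow, e, h3]
  norm_num

lemma P8_trace (u w g : Fin 2) : (P8 u w g).trace = 1 := by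
  unfold P8
  rw [bloch_eq, Matrix.trace_fin_two]
  simp
  ring

lemma P8_psd (u w g : Fin 2) : (P8 u w g).PosSemidef := by
  have := Matrix.posSemidef_conjTranspose_mul_self (P8 u w g)
  rwa [P8_herm, P8_idem] at this

lemma P8_sum : (∑ b : Fin 2 × Fin 2, (1/2 : ℂ) • P8 b.1 b.2 0) = 1 := by
  rw [Fintype.sum_prod_type]
  simp only [Fin.sum_univ_two, P8, bloch_eq]
  ext i j
  fin_cases i <;> fin_cases j <;> simp <;> ring

lemma P8_val : (1/4) * (∑ b : Fin 2 × Fin 2,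
    (((1/2 : ℂ) • P8 b.1 b.2 0) * P8 b.1 b.2 0).trace.re) = 1/2 := by
  simp only [Matrix.smul_mul, P8_idem, Matrix.trace_smul, P8_trace]
  simp

lemma half_psd (b : Fin 2 × Fin 2) : ((1/2 : ℂ) • P8 b.1 b.2 0).PosSemidef :=
  (P8_psd _ _ _).smul (by rw [Complex.le_def]; norm_num)

lemma trace_le (M : Matrix (Fin 2) (Fin 2) ℂ) (hM : M.PosSemidef) (u w g : Fin 2) :
    (M * P8 u w g).trace.re ≤ M.trace.re := by
  have hq : (1 - P8 u w g)ᴴ = 1 - P8 u w g := by simp [P8_herm]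
  have hqq : (1 - P8 u w g) * (1 - P8 u w g) = 1 - P8 u w g := by
    simp [sub_mul, mul_sub, P8_idem]
  have h := (hM.mul_mul_conjTranspose_same (1 - P8 u w g)).trace_nonneg
  rw [hq, Matrix.trace_mul_comm, ← mul_assoc, hqq, Matrix.trace_mul_comm, mul_sub, mul_one,
    Matrix.trace_sub] at h
  have := (Complex.le_def.1 h).1
  simp at this
  linarith

/-- **Attack K1 on 8-state encoding, min-entropy.** The optimal probability of
guessing the uniformly random basis key `(u,w)` from a qubit known to encode
`g = 0` equals `1/2`, attained by the POVM `M_{uw} = P_{uw0}/2`. -/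
theorem stmt18 :
    (sSup {g : ℝ | ∃ M : Fin 2 × Fin 2 → Matrix (Fin 2) (Fin 2) ℂ,
        (∀ b, (M b).PosSemidef) ∧ (∑ b, M b) = 1 ∧
        g = (1/4) * ∑ b, (M b * P8 b.1 b.2 0).trace.re} = 1/2) ∧
    ((∀ b : Fin 2 × Fin 2, ((1/2 : ℂ) • P8 b.1 b.2 0).PosSemidef) ∧
      (∑ b : Fin 2 × Fin 2, (1/2 : ℂ) • P8 b.1 b.2 0) = 1) ∧
    (1/4) * (∑ b : Fin 2 × Fin 2, (((1/2 : ℂ) • P8 b.1 b.2 0) * P8 b.1 b.2 0).trace.re)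
      = 1/2 := by
  refine ⟨?_, ⟨half_psd, P8_sum⟩, P8_val⟩
  refine IsGreatest.csSup_eq ⟨⟨_, half_psd, P8_sum, P8_val.symm⟩, ?_⟩
  rintro x ⟨M, hM, hs, rfl⟩
  have h1 : ∑ b, (M b * P8 b.1 b.2 0).trace.re ≤ ∑ b, (M b).trace.re :=
    Finset.sum_le_sum fun b _ => trace_le _ (hM b) _ _ _
  have h2 : ∑ b, (M b).trace.re = 2 := by
    rw [← Complex.re_sum, ← Matrix.trace_sum, hs]
    simp
  linarith
end

section
/- For u, w, g ∈ {0,1} let n_{uwg} = ((−1)^g/√3)·((−1)^u, (−1)^{u+w}, (−1)^w) ∈ ℝ³ and P_{uwg} = ½(I + n_{uwg}·σ) the corresponding rank-one projector on ℂ² (σ the vector of Pauli matrices), and define the POVM M_{uw} = ½·P_{uw1}. Then (M_{uw})_{u,w∈{0,1}} is a POVM on ℂ² and for every b = (u,w) ∈ {0,1}²: tr(M_b P_{b0}) = 0 and tr(M_m P_{b0}) = 1/3 for every m ∈ {0,1}² with m ≠ b; consequently the conditional Shannon entropy of the uniformly distributed basis key B ∈ {0,1}² given the measurement outcome equals log₂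 3. -/
open Matrix ComplexOrder

/-- Conditional Shannon entropy of a joint distribution `P(b,m)`,
with the convention `0·log 0 = 0`. -/
noncomputable def condEnt {B M : Type*} [Fintype B] [Fintype M] (P : B → M → ℝ) : ℝ :=
  ∑ m : M, (∑ b : B, P b m) *
    ∑ b : B, (P b m / ∑ b' : B, P b' m) * Real.logb 2 (1 / (P b m / ∑ b' : B, P b' m))

/-- The Shannon-optimal POVM `M_{uw} = P_{uw1}/2` for attack K1 on the 8-state
basis key. -/
noncomputable def Mpovm8 (b : Fin 2 × Fin 2) : Matrix (Fin 2) (Fin 2) ℂ :=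
  (1/2 : ℂ) • P8 b.1 b.2 1

theorem aux_trace_s19 (a b c a' b' c' : ℝ) :
    ((1 + pauliVec a b c) * (1 + pauliVec a' b' c')).trace
      = ((2 + 2 * (a * a' + b * b' + c * c') : ℝ) : ℂ) := by
  simp [pauliVec, pauliX, pauliY, pauliZ, Matrix.trace_fin_two, Matrix.mul_apply,
    Fin.sum_univ_two, Matrix.one_apply]
  ring_nf
  simp only [Complex.I_sq]
  ring

theorem aux_herm (a b c : ℝ) : (pauliVec a b c)ᴴ = pauliVec a b c := by
  ext i j
  fin_cases i <;> fin_cases j <;> simp [pauliVec, pauliX, pauliY, pauliZ]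

theorem aux_sq (a b c : ℝ) (h : a * a + b * b + c * c = 1) :
    pauliVec a b c * pauliVec a b c = 1 := by
  have h' : (a : ℂ) * a + b * b + c * c = 1 := by exact_mod_cast h
  ext i j
  fin_cases i <;> fin_cases j <;>
    simp [pauliVec, pauliX, pauliY, pauliZ, Matrix.mul_apply, Fin.sum_univ_two] <;>
    ring_nf <;> simp only [Complex.I_sq] <;> linear_combination h'

theorem aux_psd (a b c : ℝ) (h : a * a + b * b + c * c = 1) :
    (1 + pauliVec a b c).PosSemidef := by
  have h1 := (Matrix.posSemidef_conjTranspose_mul_self (1 + pauliVec a b c)).smul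
    (show (0 : ℝ) ≤ 1 / 2 by norm_num)
  convert h1 using 1
  rw [Matrix.conjTranspose_add, Matrix.conjTranspose_one, aux_herm, mul_add, add_mul, add_mul,
    aux_sq a b c h, one_mul, one_mul, mul_one]
  module

theorem aux_div (x y : ℝ) : x / Real.sqrt 3 * (y / Real.sqrt 3) = x * y / 3 := by
  rw [div_mul_div_comm, Real.mul_self_sqrt (by norm_num)]

theorem aux_tr_s19 (m b : Fin 2 × Fin 2) :
    (Mpovm8 m * P8 b.1 b.2 0).trace = if m = b then 0 else (1/3 : ℂ) := by
  unfold Mpovm8 P8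
  rw [Matrix.smul_mul, Matrix.smul_mul, Matrix.mul_smul, Matrix.trace_smul, Matrix.trace_smul,
    Matrix.trace_smul, aux_trace_s19, aux_div, aux_div, aux_div]
  obtain ⟨u, w⟩ := m
  obtain ⟨u', w'⟩ := b
  fin_cases u <;> fin_cases w <;> fin_cases u' <;> fin_cases w' <;> norm_num

/-- **Attack K1 on 8-state encoding, Shannon entropy.** `M_{uw} = P_{uw1}/2` is
a POVM with `tr(M_b P_{b0}) = 0` and `tr(M_m P_{b0}) = 1/3` for `m ≠ b`, so the
conditional Shannon entropy of the uniform basis key `B` given the outcome is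
`log₂ 3`. -/
theorem stmt19 :
    ((∀ b, (Mpovm8 b).PosSemidef) ∧ (∑ b, Mpovm8 b) = 1) ∧
    (∀ b : Fin 2 × Fin 2, (Mpovm8 b * P8 b.1 b.2 0).trace = 0) ∧
    (∀ b m : Fin 2 × Fin 2, m ≠ b → (Mpovm8 m * P8 b.1 b.2 0).trace = (1/3 : ℂ)) ∧
    condEnt (fun b m : Fin 2 × Fin 2 => ((Mpovm8 m * P8 b.1 b.2 0).trace.re) / 4) =
      Real.logb 2 3 := by
  refine ⟨⟨fun b => ?_, ?_⟩, fun b => ?_, fun b m h => ?_, ?_⟩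
  · unfold Mpovm8 P8
    have := aux_psd ((-1:ℝ)^((1 : Fin 2).val) * (-1:ℝ)^(b.1.val) / Real.sqrt 3)
      ((-1:ℝ)^((1 : Fin 2).val) * (-1:ℝ)^(b.1.val + b.2.val) / Real.sqrt 3)
      ((-1:ℝ)^((1 : Fin 2).val) * (-1:ℝ)^(b.2.val) / Real.sqrt 3) (by
        rw [aux_div, aux_div, aux_div]
        obtain ⟨u, w⟩ := b
        fin_cases u <;> fin_cases w <;> norm_num)
    have h2 : (0 : ℂ) ≤ 1 / 2 := by
      rw [Complex.le_def]; norm_num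
    exact (this.smul h2).smul h2
  · rw [Fintype.sum_prod_type]
    simp only [Fin.sum_univ_two]
    ext i j
    fin_cases i <;> fin_cases j <;>
      simp [Mpovm8, P8, pauliVec, pauliX, pauliY, pauliZ] <;> ring
  · rw [aux_tr_s19, if_pos rfl]
  · rw [aux_tr_s19, if_neg h]
  · simp only [aux_tr_s19, condEnt, Fintype.sum_prod_type, Fin.sum_univ_two]
    norm_num
    try ring
end
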